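/- Let s₁, s₂, s₃ be natural numbers and let α₁, α₂, α₃ be real numbers with 0 < α_j < 1 for j = 1,2,3 and α₁ + α₂ + α₃ < 1. Then A₁ + A₂ + A₃ − B₁ − B₂ − B₃ + R = 1, where A₁ = (1−α₂−α₃)^{s₁+1}·Σ_{k=0}^{s₂}Σ_{l=0}^{s₃} ((s₁+k+l)!/(s₁!k!l!))·α₂^k α₃^l, A₂ = (1−α₁−α₃)^{s₂+1}·Σ_{k=0}^{s₁}Σ_{l=0}^{s₃} ((s₂+k+l)!/(s₂!k!l!))·α₁^k α₃^l, A₃ = (1−α₁−α₂)^{s₃+1}·Σ_{k=0}^{s₁}Σ_{l=0}^{s₂} ((s₃+k+l)!/(s₃!k!l!))·α₁^k α₂^l, B₁ = ((s₁+s₂+1)!/(s₁!s₂!))·( Σ_{m=0}^{s₂} ((−1)^m·C(s₂,m)/(s₁+m+1))·( (1−α₂/(1−α₃))^{s₁+m+1} − (α₁/(1−α₃))^{s₁+m+1} ) )·(1−α₃)^{s₁+s₂+2}·Σ_{k=0}^{s₃} C(s₁+s₂+k+1, k)·α₃^k, B₂ = ((s₂+s₃+1)!/(s₂!s₃!))·(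 Σ_{m=0}^{s₃} ((−1)^m·C(s₃,m)/(s₂+m+1))·( (1−α₃/(1−α₁))^{s₂+m+1} − (α₂/(1−α₁))^{s₂+m+1} ) )·(1−α₁)^{s₂+s₃+2}·Σ_{k=0}^{s₁} C(s₂+s₃+k+1, k)·α₁^k, B₃ = ((s₁+s₃+1)!/(s₁!s₃!))·( Σ_{m=0}^{s₃} ((−1)^m·C(s₃,m)/(s₁+m+1))·( (1−α₃/(1−α₂))^{s₁+m+1} − (α₁/(1−α₂))^{s₁+m+1} ) )·(1−α₂)^{s₁+s₃+2}·Σ_{k=0}^{s₂} C(s₁+s₃+k+1, k)·α₂^k, and R = ((s₁+s₂+s₃+2)!/(s₁!s₂!s₃!))·∫_{x=α₁}^{1−α₂−α₃} ( ∫_{y=α₂}^{1−α₃−x} x^{s₁} y^{s₂} (1−x−y)^{s₃} dy ) dx. -/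

import Mathlib

open intervalIntegral

/-!
The identity comes from regarding its left-hand side as a function `F` of `t = α₁`, with `α₂` and
`α₃` fixed: `F' = 0` on `t < 1`, and `F = 1` at the degenerate point `t = 1 - α₂ - α₃`.

Write `A_i`, `B_i`, `R` for the terms of the identity and `Q_{r,s,n}(x)` for
`∑_{k ≤ n} (r+s+k+1)! / (r! s! k!) x^k` (`edgePoly`).

* `A_i` is a negative multinomial sum (`negMult`). Its derivative telescopes over the box of
  summation, leaving only two boundary faces, each a product of powers
  times a `Q` (`hasDerivAt_negMult`).
* The alternating sum in `B_i` is the incomplete Beta integral `∫ x^r (1-x)^s dx`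
  (`sum_eq_integral`), so `B_i` (`triTerm`) is `Q_{r,s,n}(c) (1-c)^{r+s+2}` times such an integral
  with endpoints `a / (1-c)` and `1 - b / (1-c)`. The terms `B₁` and `B₃` depend on `t` through
  one endpoint only. In `B₂` the variable is `c`; there the endpoints contribute two boundary
  terms, and the factor `Q_{r,s,n}(t) (1-t)^{r+s+2}`, whose derivative is a single term `t^n (1-t)^{r+s+1}`
  up to a constant because it is a multiple of a one-index negative multinomial sum, contributes an integral.
* That integral cancels the derivative of `R`, and the boundary terms of the `B_i` cancel those of
  `A₂` and `A₃` by the symmetry `Q_{r,s,n} = Q_{s,r,n}`.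

At `t = 1 - α₂ - α₃` all the integrals vanish, and what is left is `A₁ + A₂ + A₃ = 1` for
probabilities `p + q + r = 1` (`negMult_add_eq_one`): in independent trials with three outcomes,
one of the outcomes is the first to exceed its quota. It is proved by summing the discrete
divergence of the multinomial terms over a box.
-/

/-! ### The building blocks -/

/-- The polynomial `∑_{k ≤ n} (r+s+k+1)! / (r! s! k!) x^k`, the common coefficient of all the
boundary terms in the derivatives below. -/
noncomputable def edgePoly (r s n : ℕ) (x : ℝ) : ℝ :=
  ∑ k ∈ Finset.range (n + 1), ((r + s + k + 1).factorial : ℝ) /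
    ((r.factorial : ℝ) * (s.factorial : ℝ) * (k.factorial : ℝ)) * x ^ k

/-- For outcomes of probabilities `1 - x - y`, `x`, `y` in independent trials, the probability that
at the `(s+1)`-st occurrence of the first outcome, the second has occurred at most `a` times and
the third at most `b` times. The terms `A₁`, `A₂`, `A₃` of the identity have this form. -/
noncomputable def negMult (s a b : ℕ) (x y : ℝ) : ℝ :=
  (1 - x - y) ^ (s + 1) *
    ∑ k ∈ Finset.range (a + 1), ∑ l ∈ Finset.range (b + 1),
      ((s + k + l).factorial : ℝ) /
        ((s.factorial : ℝ) * (k.factorial : ℝ) * (l.factorial : ℝ)) * x ^ k * y ^ l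

/-- The common form of the terms `B₁`, `B₂`, `B₃` of the identity. If `a, b, c ≥ 0`, `c < 1` and
`a + b + c ≤ 1`, then for the Dirichlet probability density
proportional to `x^r y^s z^n` on the simplex `x + y + z = 1`, it is the mass of the triangle with
vertices `(0, 0, 1)`, `(a, 1-a-c, c)` and `(1-b-c, b, c)`. -/
noncomputable def triTerm (r s n : ℕ) (a b c : ℝ) : ℝ :=
  ((r + s + 1).factorial : ℝ) / ((r.factorial : ℝ) * (s.factorial : ℝ)) *
    (∑ m ∈ Finset.range (s + 1),
      ((-1 : ℝ) ^ m * (Nat.choose s m : ℝ) / ((r : ℝ) + m + 1)) *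
        ((1 - b / (1 - c)) ^ (r + m + 1) - (a / (1 - c)) ^ (r + m + 1))) *
    (1 - c) ^ (r + s + 2) *
    ∑ k ∈ Finset.range (n + 1), (Nat.choose (r + s + k + 1) k : ℝ) * c ^ k

/-! ### Incomplete Beta integrals -/

lemma edgePoly_comm (r s n : ℕ) (x : ℝ) : edgePoly r s n x = edgePoly s r n x := by
  unfold edgePoly
  refine Finset.sum_congr rfl fun k _ => ?_
  rw [add_comm r s, mul_comm (r.factorial : ℝ)]

lemma factorial_mul_choose_sum (r s n : ℕ) (x : ℝ) :
    ((r + s + 1).factorial : ℝ) / ((r.factorial : ℝ) * (s.factorial : ℝ)) *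
      ∑ k ∈ Finset.range (n + 1), (Nat.choose (r + s + k + 1) k : ℝ) * x ^ k
      = edgePoly r s n x := by
  unfold edgePoly
  rw [Finset.mul_sum]
  refine Finset.sum_congr rfl fun k _ => ?_
  have h : ((Nat.choose (r + s + k + 1) k : ℕ) : ℝ)
      = ((r + s + k + 1).factorial : ℝ) / ((k.factorial : ℝ) * ((r + s + 1).factorial : ℝ)) := by
    rw [show r + s + k + 1 = k + (r + s + 1) by ring, Nat.cast_add_choose]
  rw [h]
  have := Nat.factorial_ne_zero (r + s + 1)
  field_simp

/-- Expand `(1 - x)^s` by the binomial theorem and integrate termwise. -/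
lemma sum_eq_integral (r s : ℕ) (a b : ℝ) :
    ∑ m ∈ Finset.range (s + 1),
      ((-1 : ℝ) ^ m * (Nat.choose s m : ℝ) / ((r : ℝ) + m + 1)) *
        (b ^ (r + m + 1) - a ^ (r + m + 1))
      = ∫ x in a..b, x ^ r * (1 - x) ^ s := by
  have h : ∀ x : ℝ, x ^ r * (1 - x) ^ s =
      ∑ m ∈ Finset.range (s + 1), (-1 : ℝ) ^ m * (Nat.choose s m : ℝ) * x ^ (r + m) := by
    intro x
    rw [show (1 - x) = (-x) + 1 by ring, add_pow, Finset.mul_sum]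
    refine Finset.sum_congr rfl fun m _ => ?_
    rw [neg_pow, one_pow, pow_add]; ring
  simp_rw [h]
  rw [intervalIntegral.integral_finsetSum]
  · refine Finset.sum_congr rfl fun m _ => ?_
    rw [intervalIntegral.integral_const_mul, integral_pow]
    push_cast; ring
  · intro m _
    exact (by fun_prop : Continuous _).intervalIntegrable _ _

lemma triTerm_eq (r s n : ℕ) (a b c : ℝ) :
    triTerm r s n a b c = edgePoly r s n c * (1 - c) ^ (r + s + 2) *
      ∫ x in (a / (1 - c))..(1 - b / (1 - c)), x ^ r * (1 - x) ^ s := by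
  rw [triTerm, sum_eq_integral, ← factorial_mul_choose_sum]; ring

lemma integral_scale (r s : ℕ) (a b c : ℝ) (hc : 0 < c) :
    c ^ (r + s + 1) * ∫ x in (a / c)..(1 - b / c), x ^ r * (1 - x) ^ s
      = ∫ y in a..(c - b), y ^ r * (c - y) ^ s := by
  have h : ∀ y : ℝ, y ^ r * (c - y) ^ s = c ^ (r + s) * ((y / c) ^ r * (1 - y / c) ^ s) := by
    intro y
    rw [show c - y = c * (1 - y / c) by field_simp, mul_pow, div_pow, pow_add]
    field_simp
  simp_rw [h]
  rw [intervalIntegral.integral_const_mul,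
    intervalIntegral.integral_comp_div (fun x => x ^ r * (1 - x) ^ s) hc.ne', sub_div,
    div_self hc.ne', smul_eq_mul]
  ring

/-! ### Derivatives of the terms -/

/-- The derivative is `(1 - t - y)^s` times a sum over the box `k ≤ a`, `l ≤ b` of a discrete
divergence, so that only the faces `k = a + 1` and `l = b + 1` remain. -/
lemma hasDerivAt_negMult (s a b : ℕ) (t y : ℝ) :
    HasDerivAt (fun t => negMult s a b t y)
      (-((1 - t - y) ^ s * ((1 - y) * t ^ a * edgePoly s a b y
        + y ^ (b + 1) * edgePoly s b a t))) t := by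
  set c : ℕ → ℕ → ℝ := fun k l => ((s + k + l).factorial : ℝ) /
        ((s.factorial : ℝ) * (k.factorial : ℝ) * (l.factorial : ℝ)) with hc
  -- `V k l` is the `t`-derivative of `c k l * t ^ k * y ^ l`; up to the factor `-(1 - y)` it is also
  -- the flux in the `k`-direction below, and `-W` is the flux in the `l`-direction.
  set V : ℕ → ℕ → ℝ := fun k l => c k l * (k * t ^ (k - 1)) * y ^ l with hV
  set W : ℕ → ℕ → ℝ := fun k l => l * c k l * t ^ k * y ^ l with hW
  have hS : HasDerivAt (fun t => ∑ k ∈ Finset.range (a + 1), ∑ l ∈ Finset.range (b + 1),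
      c k l * t ^ k * y ^ l)
      (∑ k ∈ Finset.range (a + 1), ∑ l ∈ Finset.range (b + 1), V k l) t :=
    HasDerivAt.fun_sum fun k _ => HasDerivAt.fun_sum fun l _ =>
      ((hasDerivAt_pow k t).const_mul (c k l)).mul_const (y ^ l)
  have hp : HasDerivAt (fun t => (1 - t - y) ^ (s + 1))
      (((s + 1 : ℕ) : ℝ) * (1 - t - y) ^ s * (-1)) t := by
    have h0 : HasDerivAt (fun t : ℝ => 1 - t - y) (-1) t :=
      ((hasDerivAt_id t).const_sub 1).sub_const y
    simpa using h0.fun_pow (s + 1)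
  -- `c` satisfies the recurrences `(k+1) c(k+1,l) = (s+k+l+1) c(k,l) = (l+1) c(k,l+1)`.
  have hck : ∀ k l, c (k + 1) l * ((k : ℝ) + 1) = (s + k + l + 1) * c k l := by
    intro k l
    simp only [hc]
    rw [show s + (k + 1) + l = (s + k + l) + 1 by ring, Nat.factorial_succ, Nat.factorial_succ]
    push_cast
    field_simp
  have hcl : ∀ k l : ℕ, ((l : ℝ) + 1) * c k (l + 1) = (s + k + l + 1) * c k l := by
    intro k l
    simp only [hc]
    rw [show s + k + (l + 1) = (s + k + l) + 1 by ring, Nat.factorial_succ, Nat.factorial_succ]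
    push_cast
    field_simp
  have hVt : ∀ k l, t * V k l = k * c k l * t ^ k * y ^ l := by
    intro k l
    cases k with
    | zero => simp [hV]
    | succ k => simp only [hV, Nat.add_sub_cancel, pow_succ]; ring
  have hVs : ∀ k l, V (k + 1) l = (s + k + l + 1) * c k l * t ^ k * y ^ l := by
    intro k l
    simp only [hV, Nat.add_sub_cancel]
    push_cast
    linear_combination (t ^ k * y ^ l) * hck k l
  have hWs : ∀ k l, W k (l + 1) = y * ((s + k + l + 1) * c k l * t ^ k * y ^ l) := by
    intro k l
    simp only [hW]
    push_cast
    linear_combination (t ^ k * y ^ (l + 1)) * hcl k l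
  -- The summand of the derivative as a discrete divergence; `V 0 l = W k 0 = 0`.
  have key : ∀ k l, (1 - t - y) * V k l - (s + 1) * (c k l * t ^ k * y ^ l)
      = -(1 - y) * (V (k + 1) l - V k l) - (W k (l + 1) - W k l) := by
    intro k l
    have e : W k l = l * c k l * t ^ k * y ^ l := rfl
    rw [hWs, hVs, e]
    linear_combination -hVt k l
  have tel : (1 - t - y) * (∑ k ∈ Finset.range (a + 1), ∑ l ∈ Finset.range (b + 1), V k l)
      - (s + 1) * (∑ k ∈ Finset.range (a + 1), ∑ l ∈ Finset.range (b + 1), c k l * t ^ k * y ^ l)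
      = -(1 - y) * (∑ l ∈ Finset.range (b + 1), V (a + 1) l)
        - ∑ k ∈ Finset.range (a + 1), W k (b + 1) := by
    have e1 : ∑ l ∈ Finset.range (b + 1), V (a + 1) l
        = ∑ k ∈ Finset.range (a + 1), ∑ l ∈ Finset.range (b + 1), (V (k + 1) l - V k l) := by
      rw [Finset.sum_comm]
      refine Finset.sum_congr rfl fun l _ => ?_
      rw [Finset.sum_range_sub (fun k => V k l)]
      simp [hV]
    have e2 : ∑ k ∈ Finset.range (a + 1), W k (b + 1)
        = ∑ k ∈ Finset.range (a + 1), ∑ l ∈ Finset.range (b + 1), (W k (l + 1) - W k l) := by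
      refine Finset.sum_congr rfl fun k _ => ?_
      rw [Finset.sum_range_sub (fun l => W k l)]
      simp [hW]
    rw [e1, e2]
    simp only [Finset.mul_sum, ← Finset.sum_sub_distrib]
    exact Finset.sum_congr rfl fun k _ => Finset.sum_congr rfl fun l _ => key k l
  have f1 : ∑ l ∈ Finset.range (b + 1), V (a + 1) l = t ^ a * edgePoly s a b y := by
    rw [edgePoly, Finset.mul_sum]
    refine Finset.sum_congr rfl fun l _ => ?_
    rw [hVs]
    simp only [hc, Nat.factorial_succ]
    push_cast
    ring
  have f2 : ∑ k ∈ Finset.range (a + 1), W k (b + 1) = y ^ (b + 1) * edgePoly s b a t := by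
    rw [edgePoly, Finset.mul_sum]
    refine Finset.sum_congr rfl fun k _ => ?_
    rw [hWs]
    simp only [hc]
    rw [show s + b + k + 1 = (s + k + b) + 1 by ring, Nat.factorial_succ]
    push_cast
    ring
  rw [f1, f2] at tel
  refine (hp.mul hS).congr_deriv ?_
  push_cast
  rw [pow_succ]
  linear_combination (1 - t - y) ^ s * tel

/-- Up to a constant factor, the function is `negMult (r + s + 1) n 0 t 0`. -/
lemma hasDerivAt_edgePoly (r s n : ℕ) (t : ℝ) :
    HasDerivAt (fun t => edgePoly r s n t * (1 - t) ^ (r + s + 2))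
      (-(((r + s + n + 2).factorial : ℝ) /
        ((r.factorial : ℝ) * (s.factorial : ℝ) * (n.factorial : ℝ)) *
          t ^ n * (1 - t) ^ (r + s + 1))) t := by
  have h := (hasDerivAt_negMult (r + s + 1) n 0 t 0).const_mul
    (((r + s + 1).factorial : ℝ) / ((r.factorial : ℝ) * (s.factorial : ℝ)))
  have hne := Nat.factorial_ne_zero (r + s + 1)
  refine (h.congr_deriv ?_).congr_of_eventuallyEq (Filter.Eventually.of_forall fun x => ?_)
  · simp only [edgePoly, zero_add, Finset.sum_range_one, pow_zero, pow_one, zero_mul, add_zero,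
      sub_zero, Nat.factorial_zero, Nat.cast_one]
    rw [show r + s + 1 + n + 1 = r + s + n + 2 by ring]
    field_simp
  · simp only [edgePoly, negMult, zero_add, Finset.sum_range_one, pow_zero, add_zero,
      sub_zero, Nat.factorial_zero, Nat.cast_one, mul_one, Finset.mul_sum, Finset.sum_mul]
    refine Finset.sum_congr rfl fun k _ => ?_
    rw [show r + s + 1 + k = r + s + k + 1 by ring]
    field_simp

lemma hasDerivAt_triTerm_left (r s n : ℕ) (t b c : ℝ) (hc : c < 1) :
    HasDerivAt (fun t => triTerm r s n t b c)
      (-((1 - c - t) ^ s * ((1 - c) * t ^ r * edgePoly r s n c))) t := by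
  have hc' : (1 - c) ≠ 0 := by linarith
  simp only [triTerm_eq]
  have hcont : Continuous fun x : ℝ => x ^ r * (1 - x) ^ s := by fun_prop
  have hI := intervalIntegral.integral_hasDerivAt_left
    (hcont.intervalIntegrable (t / (1 - c)) (1 - b / (1 - c)))
    (hcont.stronglyMeasurableAtFilter _ _) hcont.continuousAt
  have hd : HasDerivAt (fun t : ℝ => t / (1 - c)) (1 / (1 - c)) t :=
    (hasDerivAt_id t).div_const _
  refine ((hI.comp t hd).const_mul (edgePoly r s n c * (1 - c) ^ (r + s + 2))).congr_deriv ?_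
  rw [show 1 - c - t = (1 - c) * (1 - t / (1 - c)) by field_simp, mul_pow, div_pow]
  field_simp
  ring

/-- The derivative in the third parameter: the moving endpoints `a / (1 - t)` and `1 - b / (1 - t)`
give the first term, the polynomial factor gives the integral. -/
lemma hasDerivAt_triTerm_right (r s n : ℕ) (a b t : ℝ) (ht : t < 1) :
    HasDerivAt (fun t => triTerm r s n a b t)
      (-(edgePoly r s n t * ((1 - t - b) ^ r * b ^ (s + 1) + a ^ (r + 1) * (1 - t - a) ^ s))
        - ((r + s + n + 2).factorial : ℝ) /
            ((r.factorial : ℝ) * (s.factorial : ℝ) * (n.factorial : ℝ)) *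
          t ^ n * ∫ y in a..(1 - t - b), y ^ r * (1 - t - y) ^ s) t := by
  have hc : 0 < 1 - t := by linarith
  have hc' : (1 - t) ≠ 0 := hc.ne'
  simp only [triTerm_eq]
  have hcont : Continuous fun x : ℝ => x ^ r * (1 - x) ^ s := by fun_prop
  have hprim : ∀ u : ℝ, HasDerivAt (fun u => ∫ x in (0 : ℝ)..u, x ^ r * (1 - x) ^ s)
      (u ^ r * (1 - u) ^ s) u := fun u => intervalIntegral.integral_hasDerivAt_right
    (hcont.intervalIntegrable _ _) (hcont.stronglyMeasurableAtFilter _ _) hcont.continuousAt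
  have hq : ∀ d : ℝ, HasDerivAt (fun t : ℝ => d / (1 - t)) (d / (1 - t) ^ 2) t := by
    intro d
    have h0 : HasDerivAt (fun t : ℝ => 1 - t) (-1) t := (hasDerivAt_id t).const_sub 1
    refine ((hasDerivAt_const t d).fun_div h0 hc').congr_deriv ?_
    ring
  have hI : HasDerivAt
      (fun t => ∫ x in (a / (1 - t))..(1 - b / (1 - t)), x ^ r * (1 - x) ^ s)
      ((1 - b / (1 - t)) ^ r * (1 - (1 - b / (1 - t))) ^ s * (-(b / (1 - t) ^ 2))
        - (a / (1 - t)) ^ r * (1 - a / (1 - t)) ^ s * (a / (1 - t) ^ 2)) t := by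
    have h1 := ((hprim (1 - b / (1 - t))).comp t ((hq b).const_sub 1)).sub
      ((hprim (a / (1 - t))).comp t (hq a))
    refine h1.congr_of_eventuallyEq (Filter.Eventually.of_forall fun u => ?_)
    exact (intervalIntegral.integral_interval_sub_left (hcont.intervalIntegrable _ _)
      (hcont.intervalIntegrable _ _)).symm
  refine ((hasDerivAt_edgePoly r s n t).fun_mul hI).congr_deriv ?_
  rw [← integral_scale r s a b (1 - t) hc]
  have e1 : (1 - t - b) = (1 - t) * (1 - b / (1 - t)) := by field_simp
  have e2 : (1 - t - a) = (1 - t) * (1 - a / (1 - t)) := by field_simp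
  have e3 : (1 - (1 - b / (1 - t))) = b / (1 - t) := by ring
  rw [e1, e2, e3]
  simp only [mul_pow, div_pow]
  field_simp
  ring

lemma hasDerivAt_double_integral (s₁ s₂ s₃ : ℕ) (b c e t : ℝ) :
    HasDerivAt (fun t => ∫ x in t..e, ∫ y in b..(1 - c - x),
        x ^ s₁ * y ^ s₂ * (1 - x - y) ^ s₃)
      (-(t ^ s₁ * ∫ y in b..(1 - t - c), y ^ s₂ * (1 - t - y) ^ s₃)) t := by
  have hcont : Continuous fun x : ℝ => ∫ y in b..(1 - c - x),
      x ^ s₁ * y ^ s₂ * (1 - x - y) ^ s₃ :=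
    intervalIntegral.continuous_parametric_intervalIntegral_of_continuous
      (f := fun x y : ℝ => x ^ s₁ * y ^ s₂ * (1 - x - y) ^ s₃) (by fun_prop) (by fun_prop)
  refine (intervalIntegral.integral_hasDerivAt_left (hcont.intervalIntegrable _ _)
    (hcont.stronglyMeasurableAtFilter _ _) hcont.continuousAt).congr_deriv ?_
  rw [← intervalIntegral.integral_const_mul, show 1 - c - t = 1 - t - c by ring]
  simp only [mul_assoc]

/-! ### The degenerate configuration -/

/-- If `a + b + c = 1`, the two endpoints of the Beta integral coincide. -/
lemma triTerm_degenerate (r s n : ℕ) (a b c : ℝ) (hc : c < 1) (h : a + b + c = 1) :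
    triTerm r s n a b c = 0 := by
  have hc' : 1 - c ≠ 0 := by linarith
  have e : 1 - b / (1 - c) = a / (1 - c) := by
    field_simp
    linarith
  rw [triTerm_eq, e, intervalIntegral.integral_same, mul_zero]

/-- In independent trials with outcome probabilities `p`, `q`, `r`, exactly one outcome is the
first to exceed its quota `s₁`, `s₂` or `s₃`. The proof is algebraic and needs only
`p + q + r = 1`. -/
lemma negMult_add_eq_one (s₁ s₂ s₃ : ℕ) (p q r : ℝ) (h : p + q + r = 1) :
    negMult s₁ s₂ s₃ q r + negMult s₂ s₁ s₃ p r + negMult s₃ s₁ s₂ p q = 1 := by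
  set T : ℕ → ℕ → ℕ → ℝ := fun k l m => ((k + l + m).factorial : ℝ) /
      ((k.factorial : ℝ) * (l.factorial : ℝ) * (m.factorial : ℝ)) * p ^ k * q ^ l * r ^ m with hT
  -- The share of `T k l m` contributed by sequences whose last letter is the first, second
  -- or third one; at the origin all of them vanish, because `0 / 0 = 0`.
  set U : ℕ → ℕ → ℕ → ℝ := fun k l m => (k : ℝ) / (k + l + m) * T k l m with hU
  set V : ℕ → ℕ → ℕ → ℝ := fun k l m => (l : ℝ) / (k + l + m) * T k l m with hV
  set W : ℕ → ℕ → ℕ → ℝ := fun k l m => (m : ℝ) / (k + l + m) * T k l m with hW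
  have hUs : ∀ k l m, U (k + 1) l m = p * T k l m := by
    intro k l m
    have : (k : ℝ) + 1 + l + m ≠ 0 := by positivity
    simp only [hU, hT]
    rw [show k + 1 + l + m = (k + l + m) + 1 by ring, Nat.factorial_succ, Nat.factorial_succ]
    push_cast
    field_simp
    ring
  have hVs : ∀ k l m, V k (l + 1) m = q * T k l m := by
    intro k l m
    have : (k : ℝ) + (l + 1) + m ≠ 0 := by positivity
    simp only [hV, hT]
    rw [show k + (l + 1) + m = (k + l + m) + 1 by ring, Nat.factorial_succ, Nat.factorial_succ]
    push_cast
    field_simp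
    ring
  have hWs : ∀ k l m, W k l (m + 1) = r * T k l m := by
    intro k l m
    have : (k : ℝ) + l + (m + 1) ≠ 0 := by positivity
    simp only [hW, hT]
    rw [show k + l + (m + 1) = (k + l + m) + 1 by ring, Nat.factorial_succ, Nat.factorial_succ]
    push_cast
    field_simp
    ring
  have hsplit : ∀ k l m, T k l m =
      (if k = 0 then if l = 0 then if m = 0 then 1 else 0 else 0 else 0)
        + (U k l m + V k l m + W k l m) := by
    intro k l m
    by_cases h0 : k + l + m = 0
    · obtain ⟨rfl, rfl, rfl⟩ : k = 0 ∧ l = 0 ∧ m = 0 := by omega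
      simp [hT, hU, hV, hW]
    · have hne : (k : ℝ) + l + m ≠ 0 := by exact_mod_cast h0
      have hif : (if k = 0 then if l = 0 then if m = 0 then (1 : ℝ) else 0 else 0 else 0) = 0 := by
        split_ifs <;> first | rfl | omega
      rw [hif]
      simp only [hU, hV, hW]
      field_simp
      ring
  -- The discrete divergence of `(U, V, W)` is a unit mass at the origin.
  have key : ∀ k l m, (U (k + 1) l m - U k l m) + (V k (l + 1) m - V k l m)
      + (W k l (m + 1) - W k l m)
      = (if k = 0 then if l = 0 then if m = 0 then (1 : ℝ) else 0 else 0 else 0) := by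
    intro k l m
    rw [hUs, hVs, hWs]
    linear_combination hsplit k l m + T k l m * h
  have tot : ∑ k ∈ Finset.range (s₁ + 1), ∑ l ∈ Finset.range (s₂ + 1),
      ∑ m ∈ Finset.range (s₃ + 1), ((U (k + 1) l m - U k l m) + (V k (l + 1) m - V k l m)
      + (W k l (m + 1) - W k l m)) = 1 := by
    simp [key]
  simp only [Finset.sum_add_distrib] at tot
  have g1 : ∑ k ∈ Finset.range (s₁ + 1), ∑ l ∈ Finset.range (s₂ + 1),
      ∑ m ∈ Finset.range (s₃ + 1), (U (k + 1) l m - U k l m) = negMult s₁ s₂ s₃ q r := by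
    rw [Finset.sum_comm, negMult, Finset.mul_sum]
    refine Finset.sum_congr rfl fun l _ => ?_
    rw [Finset.sum_comm, Finset.mul_sum]
    refine Finset.sum_congr rfl fun m _ => ?_
    rw [Finset.sum_range_sub (fun k => U k l m), hUs, show 1 - q - r = p by linarith]
    simp only [hU, hT]
    push_cast
    ring
  have g2 : ∑ k ∈ Finset.range (s₁ + 1), ∑ l ∈ Finset.range (s₂ + 1),
      ∑ m ∈ Finset.range (s₃ + 1), (V k (l + 1) m - V k l m) = negMult s₂ s₁ s₃ p r := by
    rw [negMult, Finset.mul_sum]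
    refine Finset.sum_congr rfl fun k _ => ?_
    rw [Finset.sum_comm, Finset.mul_sum]
    refine Finset.sum_congr rfl fun m _ => ?_
    rw [Finset.sum_range_sub (fun l => V k l m), hVs, show 1 - p - r = q by linarith]
    simp only [hV, hT]
    rw [add_comm s₂ k]
    push_cast
    ring
  have g3 : ∑ k ∈ Finset.range (s₁ + 1), ∑ l ∈ Finset.range (s₂ + 1),
      ∑ m ∈ Finset.range (s₃ + 1), (W k l (m + 1) - W k l m) = negMult s₃ s₁ s₂ p q := by
    rw [negMult, Finset.mul_sum]
    refine Finset.sum_congr rfl fun k _ => ?_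
    rw [Finset.mul_sum]
    refine Finset.sum_congr rfl fun l _ => ?_
    rw [Finset.sum_range_sub (fun m => W k l m), hWs, show 1 - p - q = r by linarith]
    simp only [hW, hT]
    rw [show s₃ + k + l = k + l + s₃ by ring]
    push_cast
    ring
  rw [g1, g2, g3] at tot
  exact tot

/-! ### The identity -/

/-- Theorem 1 of Section 4 of the paper (identity (2F)), arising from integrating
holomorphic monomials over the boundary of a linearly convex polyhedron in `ℂ³`. -/
theorem identity_2F (s₁ s₂ s₃ : ℕ) (α₁ α₂ α₃ : ℝ)
    (h₁ : 0 < α₁ ∧ α₁ < 1) (h₂ : 0 < α₂ ∧ α₂ < 1) (h₃ : 0 < α₃ ∧ α₃ < 1)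
    (hsum : α₁ + α₂ + α₃ < 1) :
    -- A₁
    ((1 - α₂ - α₃) ^ (s₁ + 1) *
        ∑ k ∈ Finset.range (s₂ + 1), ∑ l ∈ Finset.range (s₃ + 1),
          ((s₁ + k + l).factorial : ℝ) /
              ((s₁.factorial : ℝ) * (k.factorial : ℝ) * (l.factorial : ℝ)) *
            α₂ ^ k * α₃ ^ l) +
    -- A₂
    ((1 - α₁ - α₃) ^ (s₂ + 1) *
        ∑ k ∈ Finset.range (s₁ + 1), ∑ l ∈ Finset.range (s₃ + 1),
          ((s₂ + k + l).factorial : ℝ) /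
              ((s₂.factorial : ℝ) * (k.factorial : ℝ) * (l.factorial : ℝ)) *
            α₁ ^ k * α₃ ^ l) +
    -- A₃
    ((1 - α₁ - α₂) ^ (s₃ + 1) *
        ∑ k ∈ Finset.range (s₁ + 1), ∑ l ∈ Finset.range (s₂ + 1),
          ((s₃ + k + l).factorial : ℝ) /
              ((s₃.factorial : ℝ) * (k.factorial : ℝ) * (l.factorial : ℝ)) *
            α₁ ^ k * α₂ ^ l) -
    -- B₁
    (((s₁ + s₂ + 1).factorial : ℝ) / ((s₁.factorial : ℝ) * (s₂.factorial : ℝ)) *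
        (∑ m ∈ Finset.range (s₂ + 1),
          ((-1 : ℝ) ^ m * (Nat.choose s₂ m : ℝ) / ((s₁ : ℝ) + m + 1)) *
            ((1 - α₂ / (1 - α₃)) ^ (s₁ + m + 1) - (α₁ / (1 - α₃)) ^ (s₁ + m + 1))) *
        (1 - α₃) ^ (s₁ + s₂ + 2) *
        ∑ k ∈ Finset.range (s₃ + 1), (Nat.choose (s₁ + s₂ + k + 1) k : ℝ) * α₃ ^ k) -
    -- B₂
    (((s₂ + s₃ + 1).factorial : ℝ) / ((s₂.factorial : ℝ) * (s₃.factorial : ℝ)) *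
        (∑ m ∈ Finset.range (s₃ + 1),
          ((-1 : ℝ) ^ m * (Nat.choose s₃ m : ℝ) / ((s₂ : ℝ) + m + 1)) *
            ((1 - α₃ / (1 - α₁)) ^ (s₂ + m + 1) - (α₂ / (1 - α₁)) ^ (s₂ + m + 1))) *
        (1 - α₁) ^ (s₂ + s₃ + 2) *
        ∑ k ∈ Finset.range (s₁ + 1), (Nat.choose (s₂ + s₃ + k + 1) k : ℝ) * α₁ ^ k) -
    -- B₃
    (((s₁ + s₃ + 1).factorial : ℝ) / ((s₁.factorial : ℝ) * (s₃.factorial : ℝ)) *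
        (∑ m ∈ Finset.range (s₃ + 1),
          ((-1 : ℝ) ^ m * (Nat.choose s₃ m : ℝ) / ((s₁ : ℝ) + m + 1)) *
            ((1 - α₃ / (1 - α₂)) ^ (s₁ + m + 1) - (α₁ / (1 - α₂)) ^ (s₁ + m + 1))) *
        (1 - α₂) ^ (s₁ + s₃ + 2) *
        ∑ k ∈ Finset.range (s₂ + 1), (Nat.choose (s₁ + s₃ + k + 1) k : ℝ) * α₂ ^ k) +
    -- R
    (((s₁ + s₂ + s₃ + 2).factorial : ℝ) /
        ((s₁.factorial : ℝ) * (s₂.factorial : ℝ) * (s₃.factorial : ℝ)) *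
      ∫ x in α₁..(1 - α₂ - α₃), ∫ y in α₂..(1 - α₃ - x),
        x ^ s₁ * y ^ s₂ * (1 - x - y) ^ s₃) = 1 := by
  set F : ℝ → ℝ := fun t => negMult s₁ s₂ s₃ α₂ α₃ + negMult s₂ s₁ s₃ t α₃
    + negMult s₃ s₁ s₂ t α₂ - triTerm s₁ s₂ s₃ t α₂ α₃ - triTerm s₂ s₃ s₁ α₂ α₃ t
    - triTerm s₁ s₃ s₂ t α₃ α₂ + ((s₁ + s₂ + s₃ + 2).factorial : ℝ) /
        ((s₁.factorial : ℝ) * (s₂.factorial : ℝ) * (s₃.factorial : ℝ)) *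
      ∫ x in t..(1 - α₂ - α₃), ∫ y in α₂..(1 - α₃ - x),
        x ^ s₁ * y ^ s₂ * (1 - x - y) ^ s₃ with hF
  change F α₁ = 1
  have hderiv : ∀ t ∈ Set.Iio (1 : ℝ), HasDerivAt F 0 t := by
    intro t ht
    refine ((((((hasDerivAt_negMult s₂ s₁ s₃ t α₃).const_add _).add
      (hasDerivAt_negMult s₃ s₁ s₂ t α₂)).sub
      (hasDerivAt_triTerm_left s₁ s₂ s₃ t α₂ α₃ h₃.2)).sub
      (hasDerivAt_triTerm_right s₂ s₃ s₁ α₂ α₃ t ht)).sub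
      (hasDerivAt_triTerm_left s₁ s₃ s₂ t α₃ α₂ h₂.2)).add
      ((hasDerivAt_double_integral s₁ s₂ s₃ α₂ α₃ (1 - α₂ - α₃) t).const_mul _)
      |>.congr_deriv ?_
    rw [edgePoly_comm s₂ s₁, edgePoly_comm s₃ s₁, edgePoly_comm s₃ s₂,
      show s₂ + s₃ + s₁ + 2 = s₁ + s₂ + s₃ + 2 by ring]
    ring
  have hconst : F α₁ = F (1 - α₂ - α₃) :=
    isOpen_Iio.is_const_of_deriv_eq_zero isPreconnected_Iio
      (fun t ht => (hderiv t ht).differentiableAt.differentiableWithinAt)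
      (fun t ht => (hderiv t ht).deriv) h₁.2
      (by simp only [Set.mem_Iio]; linarith [h₂.1, h₃.1])
  rw [hconst]
  simp only [hF]
  have hA := negMult_add_eq_one s₁ s₂ s₃ (1 - α₂ - α₃) α₂ α₃ (by ring)
  rw [triTerm_degenerate s₁ s₂ s₃ _ _ _ h₃.2 (by ring),
    triTerm_degenerate s₂ s₃ s₁ _ _ _ (by linarith [h₂.1, h₃.1]) (by ring),
    triTerm_degenerate s₁ s₃ s₂ _ _ _ h₂.2 (by ring), intervalIntegral.integral_same]
  linear_combination hA
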